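/- (Exchange property for determinant signs) Let a₁,…,a_r, b₁,…,b_r ∈ ℝ^r. If det(b_i, a₂,…,a_r) · det(b₁,…,b_{i−1}, a₁, b_{i+1},…,b_r) ≥ 0 holds for all i = 1,…,r, then det(a₁,…,a_r) · det(b₁,…,b_r) ≥ 0. -/

import Mathlib

/-!
The theorem follows from the Grassmann–Plücker exchange identity
`∑ i, det(b_i, a₂, …, a_r) * det(b₁, …, a₁, …, b_r) = det(a) * det(b)`,
with `a₁` in the `i`-th place: the hypothesis makes every summand nonnegative. The identity is
Cramer's rule `∑ i, det(b₁, …, a₁, …, b_r) • b_i = det(b) • a₁`, to which one applies the linear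
functional `x ↦ det(x, a₂, …, a_r)`.
-/

/-- The determinant of the `r × r` matrix whose columns are the vectors
`v 0, …, v (r-1)` in `ℝ^r`. -/
def colDet {r : ℕ} (v : Fin r → (Fin r → ℝ)) : ℝ :=
  Matrix.det (Matrix.of fun i j => v j i)

theorem colDet_update {r : ℕ} (v : Fin r → (Fin r → ℝ)) (k : Fin r) (x : Fin r → ℝ) :
    colDet (Function.update v k x) = Matrix.cramer (Matrix.of fun i j => v j i) x k := by
  rw [Matrix.cramer_apply, colDet]
  congr 1
  ext i j
  by_cases hj : j = k
  · subst hj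
    simp
  · simp [hj]

/-- The Grassmann–Plücker exchange identity, for the exchange of the `k`-th column of `a`. -/
theorem sum_colDet_exchange {r : ℕ} (a b : Fin r → (Fin r → ℝ)) (k : Fin r) :
    ∑ i, colDet (Function.update a k (b i)) * colDet (Function.update b i (a k)) =
      colDet a * colDet b := by
  set A : Matrix (Fin r) (Fin r) ℝ := Matrix.of fun i j => a j i with hA
  set B : Matrix (Fin r) (Fin r) ℝ := Matrix.of fun i j => b j i with hB
  have cramer_rule : ∑ i, B.cramer (a k) i • b i = B.det • a k := by
    rw [← Matrix.mulVec_cramer]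
    ext j
    simp [Matrix.mulVec, dotProduct, hB, mul_comm]
  have key := congrArg (fun x => A.cramer x k) cramer_rule
  have hself : A.cramer (a k) k = A.det := by
    rw [Matrix.cramer_row_self (i := k) (h := fun j => by simp [hA])]
    simp
  simp only [map_sum, map_smul, Finset.sum_apply, Pi.smul_apply, smul_eq_mul, hself] at key
  calc _ = ∑ i, B.cramer (a k) i * A.cramer (b i) k :=
        Finset.sum_congr rfl fun i _ => by
          rw [colDet_update, colDet_update, mul_comm]
    _ = B.det * A.det := key
    _ = _ := mul_comm _ _

/-- Exchange property for determinant signs: if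
`det(b_i, a₂,…,a_r) ⬝ det(b₁,…,b_{i−1}, a₁, b_{i+1},…,b_r) ≥ 0` for all
`i = 1,…,r`, then `det(a₁,…,a_r) ⬝ det(b₁,…,b_r) ≥ 0`. -/
theorem det_sign_exchange (r : ℕ) (hr : 0 < r) (a b : Fin r → (Fin r → ℝ))
    (h : ∀ i : Fin r,
      0 ≤ colDet (Function.update a ⟨0, hr⟩ (b i)) *
            colDet (Function.update b i (a ⟨0, hr⟩))) :
    0 ≤ colDet a * colDet b := by
  rw [← sum_colDet_exchange a b ⟨0, hr⟩]
  exact Finset.sum_nonneg fun i _ => h i
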